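/- arXiv:2212.10473 — 2 statements merged into one kernel-verified Lean document; each statement's English description precedes it below -/
import Mathlib

section
/- Let U be a separable Banach space, Y a Polish space and F : Y → U a Borel measurable map. Suppose ζ is a Borel probability measure on U, ν is a Borel probability measure on Y, ∫_Y ‖F(y)‖_U ν(dy) < ∞, and ζ ≼_c ν∘F⁻¹. Then there exists a measure π ∈ Π(ζ,ν) on U × Y such that its conditional measures π^u with respect to ζ satisfy ∫_Y F(y) π^u(dy) = u (Bochner integral) for ζ-almost every u ∈ U. -/
/-!
The proof combines Hahn–Banach with the Riesz–Markov–Kakutani theorem.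

The spaces `U` and `Y` are measurable retracts of the Cantor space
(`exists_measurableEmbedding_cantor`), so a measure may first be sought on a product `K × Z` of
compact metrizable spaces, with `θ : U → K` measurable and `F` living on `Z`.
On the `ν`-integrable maps `g : Z → C(K, ℝ)` consider the sublinear functional
`p(g) = ∫ sup_k g(z)(k) ν(dz)`. For `c ∈ C(K, ℝ)` and `h ∈ C(K, U*)`, the desired measure must
send the integrand `c k + h k (F z)` to `L(c, h) = ∫ (c (θ u) + h (θ u) u) ζ(du)`. The function
`φ(v) = sup_k (c k + h k v)` is convex and Lipschitz, and `c (θ u) + h (θ u) u ≤ φ(u)`, so the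
convex order gives `L(c, h) ≤ ∫ φ dζ ≤ ∫ φ ∘ F dν = p(c + h (F ·))`
(`integral_le_integral_supFn`). Hence `L` extends to a linear functional dominated by `p`
(`exists_dominated_extension`), and such a functional is positive, thus a measure on `K × Z`, with
second marginal `ν` (`exists_measure_of_le_supFn`). Testing with `h = 0` identifies its first
marginal, and testing with `h k = f k • l` gives
`∫ f(k) l(F z) dπ' = ∫ f(θ u) l(u) dζ`.

Pushing this measure to `U × Y` by the retractions gives `π` with
`∫ f(θ u) • (F y - u) dπ = 0` for all continuous `f`, which says that
`u ↦ ∫ (F y - u) π^u(dy)` vanishes `ζ`-a.e. The finite first moment of `ζ` is itself a consequence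
of the convex order (`integrable_id_of_convexDomB`).
-/

open MeasureTheory

noncomputable section

/-- The conditional measures `π^u` of a probability measure `π` on a product space with
respect to its first marginal, given by the disintegration `π(du dy) = π^u(dy) ζ(du)`. -/
def condMeas {X Y : Type*} [MeasurableSpace X] [MeasurableSpace Y]
    [StandardBorelSpace Y] [Nonempty Y]
    (σ : ProbabilityMeasure (X × Y)) (x : X) : Measure Y :=
  (σ : Measure (X × Y)).condKernel x

/-- `a` is the barycenter of the measure `μ` on a Banach space `U`:
`l(a) = ∫ l(u) μ(du)` for every continuous linear functional `l`. -/
def IsBarycenter {U : Type*} [NormedAddCommGroup U] [NormedSpace ℝ U] [MeasurableSpace U]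
    (μ : Measure U) (a : U) : Prop :=
  ∀ l : U →L[ℝ] ℝ, l a = ∫ u, l u ∂μ

/-- Convex dominance (convex order) `ζ ≼_c η` for Borel measures on a separable Banach
space: both measures have barycenters and `∫ φ dζ ≤ ∫ φ dη` for every lower semicontinuous
convex function `φ` integrable with respect to `η`. -/
def ConvexDomB {U : Type*} [NormedAddCommGroup U] [NormedSpace ℝ U] [MeasurableSpace U]
    (ζ η : Measure U) : Prop :=
  (∃ a, IsBarycenter ζ a) ∧ (∃ b, IsBarycenter η b) ∧
  ∀ φ : U → ℝ, LowerSemicontinuous φ → ConvexOn ℝ Set.univ φ → Integrable φ η →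
    ∫ u, φ u ∂ζ ≤ ∫ u, φ u ∂η

open TopologicalSpace Filter Topology CompactlySupported

set_option linter.unusedSectionVars false

/-! ### The supremum as a sublinear functional -/

section Sup
variable {K : Type*} [TopologicalSpace K] [CompactSpace K] [Nonempty K]

/-- The maximum of a continuous function on a nonempty compact space. -/
def supFn (c : C(K, ℝ)) : ℝ := ⨆ k, c k

lemma le_supFn (c : C(K, ℝ)) (k : K) : c k ≤ supFn c :=
  le_ciSup (isCompact_range c.continuous).bddAbove k

lemma supFn_le {c : C(K, ℝ)} {a : ℝ} (h : ∀ k, c k ≤ a) : supFn c ≤ a := ciSup_le h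

lemma supFn_add_le (c d : C(K, ℝ)) : supFn (c + d) ≤ supFn c + supFn d :=
  supFn_le fun k => add_le_add (le_supFn c k) (le_supFn d k)

lemma supFn_smul {t : ℝ} (ht : 0 ≤ t) (c : C(K, ℝ)) : supFn (t • c) = t * supFn c := by
  simp only [supFn, ContinuousMap.smul_apply, smul_eq_mul]
  exact (Real.mul_iSup_of_nonneg ht _).symm

lemma supFn_le_norm (c : C(K, ℝ)) : supFn c ≤ ‖c‖ :=
  supFn_le fun k => (le_abs_self _).trans (c.norm_coe_le_norm k)

lemma lipschitzWith_supFn : LipschitzWith 1 (supFn : C(K, ℝ) → ℝ) := by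
  refine LipschitzWith.of_le_add fun c d => ?_
  have h := (supFn_add_le d (c - d)).trans (add_le_add_right (supFn_le_norm _) _)
  rwa [add_sub_cancel, ← dist_eq_norm] at h

lemma abs_supFn_le (c : C(K, ℝ)) : |supFn c| ≤ ‖c‖ := by
  obtain ⟨k⟩ := ‹Nonempty K›
  exact abs_le.2 ⟨(neg_le_of_abs_le (c.norm_coe_le_norm k)).trans (le_supFn c k), supFn_le_norm c⟩

lemma integrable_supFn {Z : Type*} [MeasurableSpace Z] {ν : Measure Z} {g : Z → C(K, ℝ)}
    (hg : Integrable g ν) : Integrable (fun z => supFn (g z)) ν :=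
  hg.norm.mono' (lipschitzWith_supFn.continuous.comp_aestronglyMeasurable hg.1)
    (Eventually.of_forall fun z => abs_supFn_le (g z))

end Sup

/-- The real vector space of `ν`-integrable maps `Z → C(K, ℝ)`, as functions (not up to a.e.
equality): an integrand in `k` and `z` that is continuous in `k` and only measurable in `z`. -/
def integrableMaps {Z : Type*} [MeasurableSpace Z] (K : Type*) [TopologicalSpace K]
    [CompactSpace K] (ν : Measure Z) : Submodule ℝ (Z → C(K, ℝ)) where
  carrier := {g | Integrable g ν}
  add_mem' {f g} hf hg := by
    rw [Set.mem_ofPred_eq] at *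
    exact Integrable.add (ε' := C(K, ℝ)) hf hg
  zero_mem' := by
    rw [Set.mem_ofPred_eq]
    exact integrable_zero Z C(K, ℝ) ν
  smul_mem' c g hg := by
    rw [Set.mem_ofPred_eq] at *
    exact hg.smul c

lemma mem_integrableMaps {Z : Type*} [MeasurableSpace Z] {K : Type*} [TopologicalSpace K]
    [CompactSpace K] {ν : Measure Z} {g : Z → C(K, ℝ)} :
    g ∈ integrableMaps K ν ↔ Integrable g ν := Iff.of_eq Set.mem_ofPred_eq

/-! ### Functionals dominated by the integrated supremum are measures -/

section Riesz
variable {K Z : Type*} [TopologicalSpace K] [CompactSpace K] [Nonempty K]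
  [MetrizableSpace K] [SecondCountableTopology K] [MeasurableSpace K] [BorelSpace K]
  [TopologicalSpace Z] [CompactSpace Z]
  [MetrizableSpace Z] [SecondCountableTopology Z] [MeasurableSpace Z] [BorelSpace Z]

lemma Continuous.integrable_of_compact {E : Type*} [NormedAddCommGroup E]
    {ν : Measure Z} [IsFiniteMeasure ν] {g : Z → E} (hg : Continuous g) : Integrable g ν := by
  exact hg.integrable_of_hasCompactSupport (HasCompactSupport.of_compactSpace g)

/-- A continuous function `H` on `K × Z`, viewed as the map `z ↦ H (·, z)` into `C(K, ℝ)`. -/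
def slices (ν : Measure Z) [IsFiniteMeasure ν] : C(K × Z, ℝ) →ₗ[ℝ] integrableMaps K ν where
  toFun H := ⟨fun z => ContinuousMap.curry (H.comp .prodSwap) z,
    mem_integrableMaps.2 (ContinuousMap.curry (H.comp .prodSwap)).continuous.integrable_of_compact⟩
  map_add' _ _ := rfl
  map_smul' _ _ := rfl

/-- A linear functional `Λ` with `Λ g ≤ ∫ sup_k g(z)(k) ν(dz)` is integration against a probability
measure on `K × Z` with second marginal `ν`. The domination makes `Λ` positive, so
Riesz–Markov–Kakutani applies to it on `C(K × Z, ℝ)`; the representation extends to products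
`f(k) g(z)` with `g` merely `ν`-integrable by `L¹(ν)`-density of continuous functions. -/
lemma exists_measure_of_le_supFn (ν : Measure Z) [IsProbabilityMeasure ν]
    (Λ : integrableMaps K ν →ₗ[ℝ] ℝ) (hΛ : ∀ g, Λ g ≤ ∫ z, supFn (g.1 z) ∂ν) :
    ∃ π : Measure (K × Z), IsProbabilityMeasure π ∧ π.map Prod.snd = ν ∧
      ∀ (f : C(K, ℝ)) (g : Z → ℝ) (hg : Integrable g ν),
        ∫ p, f p.1 * g p.2 ∂π = Λ ⟨fun z => g z • f, mem_integrableMaps.2 (hg.smul_const f)⟩ := by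
  let Λ₀ : C_c(K × Z, ℝ) →ₗ[ℝ] ℝ :=
    { toFun := fun H => Λ (slices ν H.toContinuousMap)
      map_add' := fun H G => by
        rw [← map_add, ← map_add]; rfl
      map_smul' := fun c H => by
        rw [RingHom.id_apply, ← map_smul, ← map_smul]; rfl }
  let Λ₁ : C_c(K × Z, ℝ) →ₚ[ℝ] ℝ := PositiveLinearMap.mk₀ Λ₀ (fun H hH => by
    have h : Λ (-(slices ν H.toContinuousMap)) ≤ 0 :=
      (hΛ _).trans (integral_nonpos fun z => supFn_le fun k => neg_nonpos.2 (hH (k, z)))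
    rw [map_neg] at h
    exact neg_nonpos.1 h)
  let π := RealRMK.rieszMeasure Λ₁
  have hfin : IsFiniteMeasure π := inferInstance
  have hint : ∀ H : C(K × Z, ℝ), ∫ p, H p ∂π = Λ (slices ν H) := fun H =>
    RealRMK.integral_rieszMeasure Λ₁ (CompactlySupportedContinuousMap.continuousMapEquiv H)
  -- a function that does not depend on `k` is integrated against `ν`
  have hconst : ∀ (g : Z → ℝ) (hg : Integrable g ν),
      Λ ⟨fun z => g z • (1 : C(K, ℝ)), mem_integrableMaps.2 (hg.smul_const _)⟩ = ∫ z, g z ∂ν := by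
    have key : ∀ (g : Z → ℝ) (hg : Integrable g ν),
        Λ ⟨fun z => g z • (1 : C(K, ℝ)), mem_integrableMaps.2 (hg.smul_const _)⟩ ≤ ∫ z, g z ∂ν := fun g hg => by
      refine (hΛ _).trans (le_of_eq ?_)
      congr 1; ext z; simp [supFn]
    intro g hg
    refine le_antisymm (key g hg) ?_
    have h := key (fun z => - g z) hg.neg
    have e : (⟨fun z => (- g z) • (1 : C(K, ℝ)), mem_integrableMaps.2 (hg.neg.smul_const _)⟩ : integrableMaps K ν) =
        - ⟨fun z => g z • (1 : C(K, ℝ)), mem_integrableMaps.2 (hg.smul_const _)⟩ := by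
      ext z k; simp
    rw [e, map_neg, integral_neg] at h
    linarith
  have hsnd : π.map Prod.snd = ν := by
    refine ext_of_forall_integral_eq_of_IsFiniteMeasure fun g => ?_
    rw [integral_map measurable_snd.aemeasurable g.continuous.aestronglyMeasurable]
    rw [← hconst g g.continuous.integrable_of_compact]
    refine (hint (g.toContinuousMap.comp .snd)).trans ?_
    congr 1
    ext z k
    exact (mul_one _).symm
  have hprob : IsProbabilityMeasure π := by
    have : IsProbabilityMeasure (π.map Prod.snd) := by rw [hsnd]; infer_instance
    exact (Measure.isProbabilityMeasure_map_iff measurable_snd.aemeasurable).1 this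
  refine ⟨π, hprob, hsnd, fun f g hg => ?_⟩
  have hbound : ∀ (g : Z → ℝ) (hg : Integrable g ν),
      Λ ⟨fun z => g z • f, mem_integrableMaps.2 (hg.smul_const f)⟩ ≤ ‖f‖ * ∫ z, ‖g z‖ ∂ν := fun g hg => by
    refine (hΛ _).trans ?_
    rw [← integral_const_mul]
    refine integral_mono (integrable_supFn (hg.smul_const f)) (hg.norm.const_mul _) fun z => ?_
    refine (supFn_le_norm _).trans ?_
    rw [norm_smul, mul_comm]
  have hsndp : ∀ (g : Z → ℝ), Integrable g ν → Integrable (fun p : K × Z => g p.2) π :=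
    fun g hg => by
      rw [← hsnd] at hg
      exact hg.comp_measurable measurable_snd
  have hbdd : ∀ (g : Z → ℝ) , Integrable g ν → Integrable (fun p : K × Z => f p.1 * g p.2) π :=
    fun g hg => (hsndp g hg).bdd_mul (c := ‖f‖)
      (f.continuous.comp continuous_fst).aestronglyMeasurable
      (Eventually.of_forall fun p => f.norm_coe_le_norm p.1)
  have hbound' : ∀ (g : Z → ℝ) (hg : Integrable g ν),
      |∫ p, f p.1 * g p.2 ∂π| ≤ ‖f‖ * ∫ z, ‖g z‖ ∂ν := fun g hg => by
    have e : ∫ z, ‖g z‖ ∂ν = ∫ p, ‖g p.2‖ ∂π := by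
      conv_lhs => rw [← hsnd]
      rw [integral_map measurable_snd.aemeasurable (by rw [hsnd]; exact hg.norm.1)]
    rw [e, ← integral_const_mul]
    rw [← Real.norm_eq_abs]
    refine norm_integral_le_of_norm_le ((hsndp g hg).norm.const_mul _)
      (Eventually.of_forall fun p => ?_)
    rw [norm_mul]
    exact mul_le_mul_of_nonneg_right (f.norm_coe_le_norm p.1) (norm_nonneg _)
  have habs : ∀ (g : Z → ℝ) (hg : Integrable g ν),
      |Λ ⟨fun z => g z • f, mem_integrableMaps.2 (hg.smul_const f)⟩| ≤ ‖f‖ * ∫ z, ‖g z‖ ∂ν := fun g hg => by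
    refine abs_le.2 ⟨?_, hbound g hg⟩
    have h := hbound (fun z => - g z) hg.neg
    have e : (⟨fun z => (- g z) • f, mem_integrableMaps.2 (hg.neg.smul_const _)⟩ : integrableMaps K ν) =
        - ⟨fun z => g z • f, mem_integrableMaps.2 (hg.smul_const _)⟩ := by
      ext z k; simp
    rw [e, map_neg] at h
    simp only [norm_neg] at h
    linarith
  -- both sides are continuous in `g` for the `L¹(ν)` norm and agree on continuous functions
  refine eq_of_forall_dist_le fun ε hε => ?_
  obtain ⟨b, hb, hbi⟩ := hg.exists_boundedContinuous_integral_sub_le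
    (ε := ε / (2 * (‖f‖ + 1))) (by positivity)
  have hcont : ∫ p, f p.1 * b p.2 ∂π = Λ ⟨fun z => b z • f, mem_integrableMaps.2 (hbi.smul_const f)⟩ := by
    rw [show (∫ p : K × Z, f p.1 * b p.2 ∂π) = ∫ p, (f.comp .fst * b.toContinuousMap.comp .snd :
      C(K × Z, ℝ)) p ∂π from rfl, hint]
    congr 1
    ext z k
    exact mul_comm _ _
  have h1 := hbound' (fun z => g z - b z) (hg.sub hbi)
  have h2 := habs (fun z => g z - b z) (hg.sub hbi)
  have e1 : ∫ p, f p.1 * (g p.2 - b p.2) ∂π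
      = ∫ p, f p.1 * g p.2 ∂π - ∫ p, f p.1 * b p.2 ∂π := by
    rw [← integral_sub (hbdd g hg) (hbdd b hbi)]
    simp only [mul_sub]
  have e2 : (⟨fun z => (g z - b z) • f, mem_integrableMaps.2 ((hg.sub hbi).smul_const f)⟩ : integrableMaps K ν) =
      ⟨fun z => g z • f, mem_integrableMaps.2 (hg.smul_const f)⟩ - ⟨fun z => b z • f, mem_integrableMaps.2 (hbi.smul_const f)⟩ := by
    ext z k; simp [sub_mul]
  rw [e1] at h1
  rw [e2, map_sub, ← hcont] at h2
  have h3 : ‖f‖ * ∫ z, ‖g z - b z‖ ∂ν ≤ ε / 2 := by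
    calc ‖f‖ * ∫ z, ‖g z - b z‖ ∂ν ≤ (‖f‖ + 1) * (ε / (2 * (‖f‖ + 1))) := by
          gcongr; linarith
      _ = ε / 2 := by field_simp
  rw [Real.dist_eq]
  rw [abs_le] at *
  constructor <;> linarith [h1.1, h1.2, h2.1, h2.2]

end Riesz

/-! ### The functional given by the convex order -/

section Banach
variable {U : Type*} [NormedAddCommGroup U] [NormedSpace ℝ U] [CompleteSpace U]
    [SeparableSpace U] [MeasurableSpace U] [BorelSpace U]
  {K Z : Type*} [TopologicalSpace K] [CompactSpace K] [Nonempty K]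
  [MetrizableSpace K] [SecondCountableTopology K] [MeasurableSpace K] [BorelSpace K]
  [TopologicalSpace Z] [CompactSpace Z]
  [MetrizableSpace Z] [SecondCountableTopology Z] [MeasurableSpace Z] [BorelSpace Z]

/-- For a continuous field `h` of functionals, the continuous linear map sending `v : U` to the
function `k ↦ h k v`. -/
def pairing (h : C(K, U →L[ℝ] ℝ)) : U →L[ℝ] C(K, ℝ) :=
  LinearMap.mkContinuous
    { toFun := fun v => ⟨fun k => h k v, by fun_prop⟩
      map_add' := fun v w => by ext k; simp
      map_smul' := fun t v => by ext k; simp } ‖h‖ (fun v => by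
    refine (ContinuousMap.norm_le _ (by positivity)).2 fun k => ?_
    exact ((h k).le_opNorm v).trans
      (mul_le_mul_of_nonneg_right (h.norm_coe_le_norm k) (norm_nonneg v)))

@[simp] lemma pairing_apply (h : C(K, U →L[ℝ] ℝ)) (v : U) (k : K) : pairing h v k = h k v := rfl

/-- Convex dominance by a measure with finite first moment forces a finite first moment. The
integrals in `ConvexDomB` are Bochner integrals, equal to `0` for nonintegrable functions, so this
is not just the case `φ = ‖·‖`. -/
lemma integrable_id_of_convexDomB {ζ η : Measure U} [IsProbabilityMeasure ζ]
    [IsProbabilityMeasure η] (hη : Integrable (fun v => v) η) (hdom : ConvexDomB ζ η) :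
    Integrable (fun v => v) ζ := by
  by_contra hζ
  -- otherwise a translate of the norm by a large constant has junk `ζ`-integral `0`
  set C : ℝ := (∫ v, ‖v‖ ∂η) + 1
  have hnot : ¬ Integrable (fun v : U => ‖v‖ - C) ζ := fun h => hζ <| by
    have h' := h.add (integrable_const C)
    refine (integrable_norm_iff measurable_id.aestronglyMeasurable).1 ?_
    refine h'.congr (Eventually.of_forall fun v => ?_)
    simp
  have h := hdom.2.2 (fun v => ‖v‖ - C) (by fun_prop : Continuous _).lowerSemicontinuous
    ((convexOn_norm (E := U) convex_univ).sub (concaveOn_const C convex_univ))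
    (hη.norm.sub (integrable_const C))
  rw [integral_undef hnot, integral_sub hη.norm (integrable_const C)] at h
  simp [C] at h
  linarith

/-- The only use of the convex order on test functions: `v ↦ sup_k (c k + h k v)` is convex and
Lipschitz, and at `v = u` it dominates the value of the integrand at `k = θ u`. -/
lemma integral_le_integral_supFn {ζ η : Measure U} [IsProbabilityMeasure ζ]
    [IsProbabilityMeasure η] (hη : Integrable (fun v => v) η) (hdom : ConvexDomB ζ η)
    {θ : U → K} (hint : Integrable (fun v => v) ζ) (c : C(K, ℝ)) (h : C(K, U →L[ℝ] ℝ))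
    (hch : Integrable (fun u => c (θ u) + h (θ u) u) ζ) :
    ∫ u, (c (θ u) + h (θ u) u) ∂ζ ≤ ∫ v, supFn (c + pairing h v) ∂η := by
  have hi : ∀ μ : Measure U, IsProbabilityMeasure μ → Integrable (fun v => v) μ →
      Integrable (fun v => supFn (c + pairing h v)) μ := fun μ _ hμ =>
    integrable_supFn (Integrable.add (ε' := C(K, ℝ)) (integrable_const c)
      ((pairing h).integrable_comp hμ))
  refine (integral_mono hch (hi ζ inferInstance hint) fun u => ?_).trans
    (hdom.2.2 _ ?_ ?_ (hi η inferInstance hη))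
  · exact le_supFn (c + pairing h u) (θ u)
  · exact (lipschitzWith_supFn.continuous.comp
      (continuous_const.add (pairing h).continuous)).lowerSemicontinuous
  · refine ⟨convex_univ, fun v _ w _ a b ha hb hab => ?_⟩
    have e : c + pairing h (a • v + b • w) = a • (c + pairing h v) + b • (c + pairing h w) := by
      ext k
      simp
      linear_combination (- c k) * hab
    beta_reduce
    rw [e, smul_eq_mul, smul_eq_mul, ← supFn_smul ha, ← supFn_smul hb]
    exact supFn_add_le _ _

/-- The test pair `(c, h)` as the integrand `(k, z) ↦ c k + h k (F z)`. -/
def testMap (ν : Measure Z) [IsFiniteMeasure ν] (F : Z → U) (hF : Integrable F ν) :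
    C(K, ℝ) × C(K, U →L[ℝ] ℝ) →ₗ[ℝ] integrableMaps K ν where
  toFun t := ⟨fun z => t.1 + pairing t.2 (F z), mem_integrableMaps.2
    (Integrable.add (ε' := C(K, ℝ)) (integrable_const t.1) ((pairing t.2).integrable_comp hF))⟩
  map_add' s t := by
    ext z k
    simp
    ring
  map_smul' a t := by
    ext z k
    simp

/-- Hahn–Banach in the form used here: a linear functional `L` on `T` with `L ≤ p ∘ J` for a
sublinear `p` factors through `J` as a linear functional dominated by `p`. -/
lemma exists_dominated_extension {T E : Type*} [AddCommGroup T] [Module ℝ T] [AddCommGroup E]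
    [Module ℝ E] (J : T →ₗ[ℝ] E) (L : T →ₗ[ℝ] ℝ) (p : E → ℝ)
    (p_hom : ∀ c : ℝ, 0 < c → ∀ x, p (c • x) = c * p x) (p_add : ∀ x y, p (x + y) ≤ p x + p y)
    (hL : ∀ t, L t ≤ p (J t)) :
    ∃ Λ : E →ₗ[ℝ] ℝ, (∀ t, Λ (J t) = L t) ∧ ∀ x, Λ x ≤ p x := by
  have p0 : p 0 = 0 := by
    have := p_hom 2 (by norm_num) 0
    rw [smul_zero] at this
    linarith
  have hker : ∀ t, J t = 0 → L t = 0 := fun t ht => by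
    have h1 := hL t
    have h2 := hL (-t)
    rw [map_neg, map_neg, ht, neg_zero, p0] at h2
    rw [ht, p0] at h1
    linarith
  obtain ⟨R, hR⟩ := J.rangeRestrict.exists_rightInverse_of_surjective J.range_rangeRestrict
  have hR' : ∀ x : LinearMap.range J, J (R x) = x := fun x =>
    congrArg Subtype.val (LinearMap.congr_fun hR x)
  obtain ⟨Λ, h1, h2⟩ := exists_extension_of_le_sublinear ⟨LinearMap.range J, L ∘ₗ R⟩ p p_hom p_add
    (fun x => by
      refine (hL (R x)).trans (le_of_eq ?_)
      rw [hR'])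
  refine ⟨Λ, fun t => ?_, h2⟩
  refine (h1 ⟨J t, ⟨t, rfl⟩⟩).trans ?_
  refine sub_eq_zero.1 ?_
  change L (R _) - L t = 0
  rw [← map_sub]
  apply hker
  rw [map_sub, hR', sub_self]

/-- The coupling on compact models: a probability measure on `K × Z` with marginals `ζ ∘ θ⁻¹` and
`ν` that satisfies the barycenter identity tested against `f ⊗ l`. -/
lemma exists_measure_of_convexDomB (ν : Measure Z) [IsProbabilityMeasure ν] (F : Z → U)
    (hFm : Measurable F) (hF : Integrable F ν) (ζ : Measure U) [IsProbabilityMeasure ζ]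
    (hdom : ConvexDomB ζ (ν.map F)) (θ : U → K) (hθ : Measurable θ) :
    ∃ π : Measure (K × Z), IsProbabilityMeasure π ∧ π.map Prod.snd = ν ∧
      π.map Prod.fst = ζ.map θ ∧
      ∀ (f : C(K, ℝ)) (l : U →L[ℝ] ℝ),
        ∫ p, f p.1 * l (F p.2) ∂π = ∫ u, f (θ u) * l u ∂ζ := by
  have : IsProbabilityMeasure (ν.map F) := Measure.isProbabilityMeasure_map hFm.aemeasurable
  have hη : Integrable (fun v => v) (ν.map F) :=
    (integrable_map_measure measurable_id.aestronglyMeasurable hFm.aemeasurable).2 hF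
  have hζ := integrable_id_of_convexDomB hη hdom
  have hc : ∀ c : C(K, ℝ), Integrable (fun u => c (θ u)) ζ := fun c =>
    Integrable.of_bound (c.continuous.measurable.comp hθ).aestronglyMeasurable ‖c‖
      (Eventually.of_forall fun u => c.norm_coe_le_norm _)
  have hh : ∀ h : C(K, U →L[ℝ] ℝ), Integrable (fun u => h (θ u) u) ζ := fun h => by
    refine (hζ.norm.const_mul ‖h‖).mono' ?_ (Eventually.of_forall fun u =>
      ((h (θ u)).le_opNorm u).trans
        (mul_le_mul_of_nonneg_right (h.norm_coe_le_norm _) (norm_nonneg u)))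
    have h1 : StronglyMeasurable (fun u => h (θ u)) :=
      h.continuous.comp_stronglyMeasurable hθ.stronglyMeasurable
    exact ((isBoundedBilinearMap_apply (𝕜 := ℝ) (E := U)
      (F := ℝ)).continuous.comp_stronglyMeasurable
      (h1.prodMk measurable_id.stronglyMeasurable)).aestronglyMeasurable
  have ht : ∀ t : C(K, ℝ) × C(K, U →L[ℝ] ℝ),
      Integrable (fun u => t.1 (θ u) + t.2 (θ u) u) ζ := fun t => (hc t.1).add (hh t.2)
  let L : C(K, ℝ) × C(K, U →L[ℝ] ℝ) →ₗ[ℝ] ℝ :=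
    { toFun := fun t => ∫ u, (t.1 (θ u) + t.2 (θ u) u) ∂ζ
      map_add' := fun s t => by
        rw [← integral_add (ht s) (ht t)]
        congr 1; ext u; simp; ring
      map_smul' := fun a t => by
        rw [RingHom.id_apply, smul_eq_mul, ← integral_const_mul]
        congr 1; ext u; simp; ring }
  obtain ⟨Λ, hΛ, hΛp⟩ := exists_dominated_extension (testMap (K := K) ν F hF) L
    (fun g => ∫ z, supFn (g.1 z) ∂ν)
    (fun a ha g => by
      rw [← integral_const_mul]
      congr 1; ext z; exact supFn_smul ha.le _)
    (fun g g' => by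
      have hg := integrable_supFn (mem_integrableMaps.1 g.2)
      have hg' := integrable_supFn (mem_integrableMaps.1 g'.2)
      rw [← integral_add hg hg']
      exact integral_mono (integrable_supFn (mem_integrableMaps.1 (g + g').2)) (hg.add hg')
        fun z => supFn_add_le _ _)
    (fun t => by
      refine (integral_le_integral_supFn hη hdom hζ t.1 t.2 (ht t)).trans
        (le_of_eq ?_)
      refine integral_map hFm.aemeasurable ?_
      exact (lipschitzWith_supFn.continuous.comp
        (continuous_const.add (pairing t.2).continuous)).aestronglyMeasurable)
  obtain ⟨π, hπ, hsnd, hint⟩ := exists_measure_of_le_supFn ν Λ hΛp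
  have hfst : π.map Prod.fst = ζ.map θ := by
    have : IsProbabilityMeasure (ζ.map θ) := Measure.isProbabilityMeasure_map hθ.aemeasurable
    refine ext_of_forall_integral_eq_of_IsFiniteMeasure fun f => ?_
    rw [integral_map measurable_fst.aemeasurable f.continuous.aestronglyMeasurable,
      integral_map hθ.aemeasurable f.continuous.aestronglyMeasurable]
    have h1 := hint f.toContinuousMap (fun _ => 1) (integrable_const _)
    have h2 := hΛ (f.toContinuousMap, 0)
    have e : testMap ν F hF (f.toContinuousMap, 0) = ⟨fun z => (1 : ℝ) • f.toContinuousMap,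
        mem_integrableMaps.2 ((integrable_const _).smul_const _)⟩ := by
      ext z k; simp [testMap]
    rw [← e, h2] at h1
    simpa [L] using h1
  refine ⟨π, hπ, hsnd, hfst, fun f l => ?_⟩
  have hl : Integrable (fun z => l (F z)) ν := l.integrable_comp hF
  have h2 := hΛ (0, ⟨fun k => f k • l, by fun_prop⟩)
  have e : testMap ν F hF (0, ⟨fun k => f k • l, by fun_prop⟩) =
      ⟨fun z => l (F z) • f, mem_integrableMaps.2 (hl.smul_const f)⟩ := by
    ext z k; simp [testMap, mul_comm]
  rw [hint f _ hl, ← e, h2]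
  simp [L]

end Banach

/-! ### Transfer to `U × Y` and disintegration -/

/-- A vector-valued density orthogonal to all `f ∘ κ` with `f` continuous has vanishing integral
over preimages of closed sets, by approximating their indicators from above. -/
lemma setIntegral_eq_zero_of_forall_continuous {U K Ω : Type*} [NormedAddCommGroup U]
    [NormedSpace ℝ U] [TopologicalSpace K] [CompactSpace K] [MetrizableSpace K]
    [MeasurableSpace K] [BorelSpace K] [MeasurableSpace Ω] {π : Measure Ω} {G : Ω → U}
    (hG : Integrable G π) {κ : Ω → K} (hκ : Measurable κ)
    (h : ∀ f : C(K, ℝ), ∫ ω, f (κ ω) • G ω ∂π = 0) {C : Set K} (hC : IsClosed C) :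
    ∫ ω in κ ⁻¹' C, G ω ∂π = 0 := by
  let _ := metrizableSpaceMetric K
  rw [← integral_indicator (hκ hC.measurableSet)]
  let f : ℕ → C(K, ℝ) := fun n => ⟨fun k => (hC.apprSeq n k : ℝ), by fun_prop⟩
  have hlim : Tendsto (fun n => ∫ ω, f n (κ ω) • G ω ∂π) atTop
      (𝓝 (∫ ω, (κ ⁻¹' C).indicator G ω ∂π)) := by
    refine tendsto_integral_of_dominated_convergence (fun ω => ‖G ω‖) (fun n => ?_) hG.norm
      (fun n => Eventually.of_forall fun ω => ?_) (Eventually.of_forall fun ω => ?_)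
    · exact ((f n).continuous.measurable.comp hκ).aestronglyMeasurable.smul hG.1
    · rw [norm_smul]
      refine mul_le_of_le_one_left (norm_nonneg _) ?_
      have h1 := HasOuterApproxClosed.apprSeq_apply_le_one hC n (κ ω)
      change ‖(hC.apprSeq n (κ ω) : ℝ)‖ ≤ 1
      rw [Real.norm_of_nonneg (NNReal.coe_nonneg _)]
      exact h1
    · have h1 := (tendsto_pi_nhds.1 (HasOuterApproxClosed.tendsto_apprSeq hC)) (κ ω)
      have h2 : Tendsto (fun n => f n (κ ω)) atTop
          (𝓝 ((C.indicator (fun _ => (1 : NNReal)) (κ ω) : NNReal) : ℝ)) :=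
        NNReal.tendsto_coe.2 h1
      convert h2.smul_const (G ω) using 2
      by_cases hω : κ ω ∈ C
      · simp [hω]
      · simp [hω]
  simp only [h] at hlim
  exact tendsto_nhds_unique hlim tendsto_const_nhds |>.symm ▸ rfl

/-- A nonempty standard Borel space is a measurable retract of the Cantor space, a compact
metrizable space. -/
lemma exists_measurableEmbedding_cantor (X : Type*) [MeasurableSpace X] [StandardBorelSpace X]
    [Nonempty X] : ∃ (θ : X → ℕ → Bool) (r : (ℕ → Bool) → X), Measurable θ ∧ Measurable r ∧
      ∀ x, r (θ x) = x := by
  obtain ⟨θ, hθ, hinj⟩ := MeasurableSpace.measurable_injection_nat_bool_of_countablySeparated X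
  obtain ⟨r, hr, hrθ⟩ := (hθ.measurableEmbedding hinj).exists_measurable_extend measurable_id
    fun _ => ‹Nonempty X›
  exact ⟨θ, r, hθ, hr, congrFun hrθ⟩

theorem exists_coupling_barycenter_eq_banach
    {U : Type*} [NormedAddCommGroup U] [NormedSpace ℝ U] [CompleteSpace U]
    [TopologicalSpace.SeparableSpace U] [MeasurableSpace U] [BorelSpace U]
    {Y : Type*} [MeasurableSpace Y] [TopologicalSpace Y] [PolishSpace Y] [BorelSpace Y]
    [Nonempty Y]
    (F : Y → U) (hFmeas : Measurable F)
    (ζ : Measure U) [IsProbabilityMeasure ζ]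
    (ν : Measure Y) [IsProbabilityMeasure ν]
    (hFint : Integrable F ν)
    (hdom : ConvexDomB ζ (ν.map F)) :
    ∃ π : ProbabilityMeasure (U × Y),
      (π : Measure (U × Y)).map Prod.fst = ζ ∧
      (π : Measure (U × Y)).map Prod.snd = ν ∧
      ∀ᵐ u ∂ζ, ∫ y, F y ∂(condMeas π u) = u := by
  obtain ⟨θ, r, hθ, hr, hrθ⟩ := exists_measurableEmbedding_cantor U
  obtain ⟨ι, s, hι, hs, hsι⟩ := exists_measurableEmbedding_cantor Y
  have hmapι : (ν.map ι).map s = ν := by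
    rw [Measure.map_map hs hι, show s ∘ ι = id from funext hsι, Measure.map_id]
  have hmapθ : (ζ.map θ).map r = ζ := by
    rw [Measure.map_map hr hθ, show r ∘ θ = id from funext hrθ, Measure.map_id]
  have : IsProbabilityMeasure (ν.map ι) := Measure.isProbabilityMeasure_map hι.aemeasurable
  have : IsProbabilityMeasure (ν.map F) := Measure.isProbabilityMeasure_map hFmeas.aemeasurable
  have hF' : Integrable (F ∘ s) (ν.map ι) := by
    rw [← hmapι] at hFint
    exact hFint.comp_measurable hs
  obtain ⟨π', hπ', hsnd', hfst', hint'⟩ := exists_measure_of_convexDomB (ν.map ι) (F ∘ s)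
    (hFmeas.comp hs) hF' ζ
    (by rwa [← Measure.map_map hFmeas hs, hmapι]) θ hθ
  have hrs : Measurable (Prod.map r s) := hr.prodMap hs
  have hprob : IsProbabilityMeasure (π'.map (Prod.map r s)) :=
    Measure.isProbabilityMeasure_map hrs.aemeasurable
  set π : Measure (U × Y) := π'.map (Prod.map r s) with hπ
  have hfst : π.map Prod.fst = ζ := by
    rw [hπ, Measure.map_map measurable_fst hrs, show Prod.fst ∘ Prod.map r s = r ∘ Prod.fst from rfl,
      ← Measure.map_map hr measurable_fst, hfst', hmapθ]
  have hsnd : π.map Prod.snd = ν := by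
    rw [hπ, Measure.map_map measurable_snd hrs, show Prod.snd ∘ Prod.map r s = s ∘ Prod.snd from rfl,
      ← Measure.map_map hs measurable_snd, hsnd', hmapι]
  -- `θ ∘ r` is the identity almost everywhere for the first marginal of `π'`
  have hθr : ∀ᵐ p ∂π', θ (r p.1) = p.1 := by
    refine ae_of_ae_map (p := fun k => θ (r k) = k) measurable_fst.aemeasurable ?_
    rw [hfst']
    refine (ae_map_iff hθ.aemeasurable (measurableSet_eq_fun (hθ.comp hr) measurable_id)).2 ?_
    exact Eventually.of_forall fun u => congrArg θ (hrθ u)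
  have hζ : Integrable (fun v => v) ζ := integrable_id_of_convexDomB
    ((integrable_map_measure measurable_id.aestronglyMeasurable hFmeas.aemeasurable).2 hFint) hdom
  have hi1 : Integrable (fun p : U × Y => p.1) π := by
    rw [← hfst] at hζ
    exact hζ.comp_measurable measurable_fst
  have hi2 : Integrable (fun p : U × Y => F p.2) π := by
    rw [← hsnd] at hFint
    exact hFint.comp_measurable measurable_snd
  have hG : Integrable (fun p : U × Y => F p.2 - p.1) π := hi2.sub hi1
  have htest : ∀ f : C(ℕ → Bool, ℝ), ∫ p, f (θ p.1) • (F p.2 - p.1) ∂π = 0 := fun f => by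
    have hsm : ∀ {G : U × Y → U}, Integrable G π →
        Integrable (fun p => f (θ p.1) • G p) π := fun {G} hG =>
      hG.bdd_smul ‖f‖
        (f.continuous.measurable.comp (hθ.comp measurable_fst)).aestronglyMeasurable
        (Eventually.of_forall fun p => f.norm_coe_le_norm _)
    -- functionals separate points, so the scalar identities for `π'` suffice
    refine SeparatingDual.eq_zero_of_forall_dual_eq_zero (R := ℝ) fun l => ?_
    rw [← l.integral_comp_comm (hsm hG)]
    have e1 : ∫ p, f (θ p.1) * l (F p.2) ∂π = ∫ u, f (θ u) * l u ∂ζ := by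
      rw [← hint' f l, hπ, integral_map hrs.aemeasurable]
      · refine integral_congr_ae (hθr.mono fun p hp => ?_)
        simp only [Prod.map_fst, Prod.map_snd, Function.comp_apply, hp]
      · exact ((f.continuous.measurable.comp (hθ.comp measurable_fst)).mul
          (l.measurable.comp (hFmeas.comp measurable_snd))).aestronglyMeasurable
    have e2 : ∫ p, f (θ p.1) * l p.1 ∂π = ∫ u, f (θ u) * l u ∂ζ := by
      conv_rhs => rw [← hfst]
      rw [integral_map measurable_fst.aemeasurable]
      exact ((f.continuous.measurable.comp hθ).mul l.measurable).aestronglyMeasurable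
    calc ∫ p, l (f (θ p.1) • (F p.2 - p.1)) ∂π
        = ∫ p, (f (θ p.1) * l (F p.2) - f (θ p.1) * l p.1) ∂π := by simp [mul_sub]
      _ = 0 := by
        rw [integral_sub, e1, e2, sub_self]
        · simpa using l.integrable_comp (hsm hi2)
        · simpa using l.integrable_comp (hsm hi1)
  refine ⟨⟨π, hprob⟩, hfst, hsnd, ?_⟩
  change ∀ᵐ u ∂ζ, ∫ y, F y ∂(π.condKernel u) = u
  have hfst₀ : π.fst = ζ := hfst
  set m : U → U := fun u => ∫ y, (F y - u) ∂(π.condKernel u) with hm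
  have hmi : Integrable m ζ := by
    rw [← hfst₀]
    exact hG.integral_condKernel
  have hset : ∀ A : Set U, MeasurableSet A →
      ∫ u in A, m u ∂ζ = ∫ p in Prod.fst ⁻¹' A, (F p.2 - p.1) ∂π := fun A hA => by
    have h := Measure.setIntegral_condKernel_univ_right (ρ := π) hA hG.integrableOn
    rw [hfst₀, Set.prod_univ] at h
    exact h
  -- closed sets of the Cantor space suffice to see that `m` vanishes almost everywhere
  have hm0 : (m ∘ r) =ᵐ[ζ.map θ] 0 := by
    have hmr : Integrable (m ∘ r) (ζ.map θ) := by
      rw [← hmapθ] at hmi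
      exact hmi.comp_measurable hr
    refine ae_eq_zero_of_forall_setIntegral_isClosed_eq_zero hmr fun C hC => ?_
    rw [setIntegral_map hC.measurableSet hmr.1 hθ.aemeasurable]
    simp only [Function.comp_apply, hrθ]
    rw [hset _ (hθ hC.measurableSet)]
    exact setIntegral_eq_zero_of_forall_continuous hG (hθ.comp measurable_fst) htest hC
  have hm1 := ae_of_ae_map hθ.aemeasurable hm0
  have hFk : ∀ᵐ u ∂ζ, Integrable F (π.condKernel u) := by
    rw [← hfst₀]
    exact hi2.condKernel_ae
  filter_upwards [hm1, hFk] with u hu hFu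
  have h : ∫ y, (F y - u) ∂(π.condKernel u) = 0 := by
    simpa [hm, hrθ] using hu
  rw [integral_sub hFu (integrable_const u)] at h
  simpa [sub_eq_zero] using h
end
end

section
/- Let X and Y be Polish spaces, μ a Borel probability measure on X, ν a Borel probability measure on Y, and F : Y → ℝ^d a Borel measurable function integrable with respect to ν. Let T : X → ℝ^d be a Borel measurable map with μ∘T⁻¹ ≼_c ν∘F⁻¹. Then there exists σ ∈ Π(μ,ν) whose conditional measures σ^x satisfy ∫_Y F(y) σ^x(dy) = T(x) for μ-almost every x ∈ X. -/
/-!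
The proof is by convex duality, in the spirit of Strassen's theorem. Suppose that potentials
`a`, `b` and a bounded vector field `φ` satisfy
`0 ≤ a x + b y + ⟪φ x, F y - T x⟫` for all `x`, `y`. The function
`ψ u = sup_x (-a x + ⟪φ x, T x - u⟫)` is convex of linear growth with `-a ≤ ψ ∘ T` and
`ψ ∘ F ≤ b`, so that the convex order gives `0 ≤ ∫ a ∂μ + ∫ b ∂ν` (`weak_duality`).

The spaces `X` and `Y` embed measurably into the unit interval by maps `α` and `β`. By weak
duality, M. Riesz's extension theorem provides a linear functional `Λ` on the continuous functions
on the unit square such that `0 ≤ ∫ a ∂μ + ∫ b ∂ν + Λ g` whenever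
`0 ≤ a x + b y + ⟪φ (α x), F y - T x⟫ + g (α x, β y)` for all `x`, `y`, with `φ` continuous
(`exists_functional`). With `φ = 0`, this says that `Λ` is positive with the images of `μ` and `ν`
as marginals, so the Riesz–Markov–Kakutani theorem turns it into a coupling `σ` of `μ` and `ν`
(`exists_coupling_functional`).

Approximating `F` in `L¹(ν)` by functions `f ∘ β` with `f` continuous, one obtains
`∫ ⟪φ (α x), F y⟫ ∂σ = ∫ ⟪φ (α x), T x⟫ ∂μ` for every continuous `φ` (`integral_inner_le`, for `φ`
and `-φ`). After disintegration of `σ` the left side is the integral of `⟪φ (α x), ·⟫` against the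
conditional barycenter, and such test fields `φ ∘ α` identify an integrable map almost everywhere
(`ae_eq_of_integral_inner_eq`).
-/

open MeasureTheory

noncomputable section

/-- Convex dominance (convex order) `ζ ≼_c η` for Borel measures on a normed space:
both measures have finite first moments and `∫ φ dζ ≤ ∫ φ dη` for every convex
function `φ` integrable with respect to `η`. -/
def ConvexDom {E : Type*} [NormedAddCommGroup E] [NormedSpace ℝ E] [MeasurableSpace E]
    (ζ η : Measure E) : Prop :=
  Integrable (fun u => ‖u‖) ζ ∧ Integrable (fun u => ‖u‖) η ∧
  ∀ φ : E → ℝ, ConvexOn ℝ Set.univ φ → Integrable φ η → ∫ u, φ u ∂ζ ≤ ∫ u, φ u ∂η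

open scoped RealInnerProductSpace

/-- The real-valued functions integrable with respect to `μ`, as a space of genuine functions
(not classes modulo `μ`-null sets), so that they can be evaluated at every point. -/
def integrableFun {X : Type*} [MeasurableSpace X] (μ : Measure X) : Submodule ℝ (X → ℝ) where
  carrier := {a | Integrable a μ}
  zero_mem' := integrable_zero _ _ _
  add_mem' ha hb := Integrable.add ha hb
  smul_mem' c _ ha := Integrable.smul c ha

/-! ### Weak duality -/

/-- Weak duality for the barycenter problem; the only place where the inequality defining the
convex order is used.
The function `ψ u = sup_x (-a x + ⟪φ x, T x - u⟫)` is convex, and the hypothesis `h` says exactly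
that `ψ ∘ F ≤ b`, while `-a ≤ ψ ∘ T` holds by definition. Hence
`-∫ a ∂μ ≤ ∫ ψ ∘ T ∂μ ≤ ∫ ψ ∘ F ∂ν ≤ ∫ b ∂ν`. Boundedness of `φ` makes `ψ` finite and of
linear growth. -/
lemma weak_duality {X Y : Type*} [MeasurableSpace X] [MeasurableSpace Y]
    {μ : Measure X} [IsProbabilityMeasure μ] {ν : Measure Y} [IsProbabilityMeasure ν]
    {d : ℕ} {F : Y → EuclideanSpace ℝ (Fin d)} (hF : Measurable F)
    {T : X → EuclideanSpace ℝ (Fin d)} (hT : Measurable T)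
    (hdom : ConvexDom (μ.map T) (ν.map F))
    {a : X → ℝ} {b : Y → ℝ} {φ : X → EuclideanSpace ℝ (Fin d)} {K : ℝ}
    (ha : Integrable a μ) (hb : Integrable b ν) (hφ : ∀ x, ‖φ x‖ ≤ K)
    (h : ∀ x y, 0 ≤ a x + b y + ⟪φ x, F y - T x⟫) :
    0 ≤ ∫ x, a x ∂μ + ∫ y, b y ∂ν := by
  have : Nonempty X := nonempty_of_isProbabilityMeasure μ
  have : Nonempty Y := nonempty_of_isProbabilityMeasure ν
  have : IsProbabilityMeasure (μ.map T) := Measure.isProbabilityMeasure_map hT.aemeasurable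
  have : IsProbabilityMeasure (ν.map F) := Measure.isProbabilityMeasure_map hF.aemeasurable
  obtain ⟨x₀⟩ := ‹Nonempty X›
  obtain ⟨y₀⟩ := ‹Nonempty Y›
  let ψ : EuclideanSpace ℝ (Fin d) → ℝ := fun u => ⨆ x, (-a x + ⟪φ x, T x - u⟫)
  have hup : ∀ u x, -a x + ⟪φ x, T x - u⟫ ≤ b y₀ + K * ‖F y₀ - u‖ := fun u x => by
    have h1 := h x y₀
    have h2 : ⟪φ x, F y₀ - u⟫ ≤ K * ‖F y₀ - u‖ :=
      (real_inner_le_norm _ _).trans (mul_le_mul_of_nonneg_right (hφ x) (norm_nonneg _))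
    have h3 : ⟪φ x, T x - u⟫ = ⟪φ x, F y₀ - u⟫ - ⟪φ x, F y₀ - T x⟫ := by
      rw [← inner_sub_right]; congr 1; abel
    linarith
  have hbdd : ∀ u, BddAbove (Set.range fun x => -a x + ⟪φ x, T x - u⟫) := fun u =>
    ⟨_, by rintro _ ⟨x, rfl⟩; exact hup u x⟩
  have hle : ∀ x u, -a x + ⟪φ x, T x - u⟫ ≤ ψ u := fun x u => le_ciSup (hbdd u) x
  have hψT : ∀ x, -a x ≤ ψ (T x) := fun x => by simpa using hle x (T x)
  have hψF : ∀ y, ψ (F y) ≤ b y := fun y => ciSup_le fun x => by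
    have h1 := h x y
    have h3 : ⟪φ x, T x - F y⟫ = - ⟪φ x, F y - T x⟫ := by
      rw [← inner_neg_right]; congr 1; abel
    linarith
  have hconv : ConvexOn ℝ Set.univ ψ := by
    refine ⟨convex_univ, fun u _ v _ s t hs ht hst => ciSup_le fun x => ?_⟩
    have h3 : -a x + ⟪φ x, T x - (s • u + t • v)⟫
        = s * (-a x + ⟪φ x, T x - u⟫) + t * (-a x + ⟪φ x, T x - v⟫) := by
      simp only [inner_sub_right, inner_add_right, inner_smul_right]
      linear_combination (-a x + ⟪φ x, T x⟫) * (-hst)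
    rw [h3, smul_eq_mul, smul_eq_mul]
    exact add_le_add (mul_le_mul_of_nonneg_left (hle x u) hs)
      (mul_le_mul_of_nonneg_left (hle x v) ht)
  have hcont : Continuous ψ := continuousOn_univ.1 (hconv.continuousOn isOpen_univ)
  -- A convex function lying between two functions of linear growth is integrable.
  have hint : ∀ ρ : Measure (EuclideanSpace ℝ (Fin d)), IsProbabilityMeasure ρ →
      Integrable (fun u => ‖u‖) ρ → Integrable ψ ρ := fun ρ _ hρ => by
    have hid : Integrable (fun u : EuclideanSpace ℝ (Fin d) => u) ρ :=
      (integrable_norm_iff (by fun_prop)).1 hρ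
    refine integrable_of_le_of_le (g₁ := fun u => -a x₀ + ⟪φ x₀, T x₀ - u⟫)
      (g₂ := fun u => b y₀ + K * ‖F y₀ - u‖) hcont.aestronglyMeasurable
      (ae_of_all _ fun u => hle x₀ u) (ae_of_all _ fun u => ciSup_le (hup u)) ?_ ?_
    · exact (integrable_const _).add (((integrable_const _).sub hid).const_inner _)
    · exact (integrable_const _).add ((((integrable_const _).sub hid).norm).const_mul _)
  have hiT := hint _ inferInstance hdom.1
  have hiF := hint _ inferInstance hdom.2.1
  have key := hdom.2.2 ψ hconv hiF
  rw [integral_map hT.aemeasurable hcont.aestronglyMeasurable,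
    integral_map hF.aemeasurable hcont.aestronglyMeasurable] at key
  have h1 : ∫ x, -a x ∂μ ≤ ∫ x, ψ (T x) ∂μ :=
    integral_mono ha.neg (hiT.comp_measurable hT) hψT
  have h2 : ∫ y, ψ (F y) ∂ν ≤ ∫ y, b y ∂ν :=
    integral_mono (hiF.comp_measurable hF) hb hψF
  rw [integral_neg] at h1
  linarith

/-! ### Extension of the functional of potentials -/

/-- A positive extension of the functional `(a, b, φ) ↦ ∫ a ∂μ + ∫ b ∂ν`, obtained from
M. Riesz's theorem for the cone of quadruples `(a, b, φ, g)` whose sum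
`a x + b y + ⟪φ (α x), F y - T x⟫ + g (α x, β y)` is nonnegative at every point. The functional
is defined on the subspace `g = 0` and is nonnegative on the cone there by `weak_duality`.
Since `(a, b, φ)` is kept as a formal triple, one need not know that the functional depends only on
the function of `(x, y)` which the triple represents. -/
lemma exists_functional {X Y : Type*} [MeasurableSpace X] [MeasurableSpace Y]
    {μ : Measure X} [IsProbabilityMeasure μ] {ν : Measure Y} [IsProbabilityMeasure ν]
    {d : ℕ} {F : Y → EuclideanSpace ℝ (Fin d)} (hF : Measurable F)
    {T : X → EuclideanSpace ℝ (Fin d)} (hT : Measurable T)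
    (hdom : ConvexDom (μ.map T) (ν.map F)) (α : X → unitInterval) (β : Y → unitInterval) :
    ∃ Λ : C(unitInterval × unitInterval, ℝ) →ₗ[ℝ] ℝ, ∀ (a : X → ℝ) (b : Y → ℝ)
      (φ : C(unitInterval, EuclideanSpace ℝ (Fin d))) (g : C(unitInterval × unitInterval, ℝ)),
      Integrable a μ → Integrable b ν →
      (∀ x y, 0 ≤ a x + b y + ⟪φ (α x), F y - T x⟫ + g (α x, β y)) →
      0 ≤ ∫ x, a x ∂μ + ∫ y, b y ∂ν + Λ g := by
  let P := integrableFun μ × integrableFun ν × C(unitInterval, EuclideanSpace ℝ (Fin d))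
  let s : PointedCone ℝ (P × C(unitInterval × unitInterval, ℝ)) :=
    { carrier := {p | ∀ x y, 0 ≤ p.1.1.1 x + p.1.2.1.1 y + ⟪p.1.2.2 (α x), F y - T x⟫
        + p.2 (α x, β y)}
      zero_mem' := fun x y => by simp
      add_mem' := fun {p q} hp hq x y => by
        have h := add_nonneg (hp x y) (hq x y)
        change 0 ≤ (p.1.1.1 x + q.1.1.1 x) + (p.1.2.1.1 y + q.1.2.1.1 y) +
          ⟪p.1.2.2 (α x) + q.1.2.2 (α x), F y - T x⟫ + (p.2 (α x, β y) + q.2 (α x, β y))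
        rw [inner_add_left]
        linarith
      smul_mem' := fun c p hp x y => by
        have h := mul_nonneg c.2 (hp x y)
        change 0 ≤ (c : ℝ) * p.1.1.1 x + (c : ℝ) * p.1.2.1.1 y +
          ⟪(c : ℝ) • p.1.2.2 (α x), F y - T x⟫ + (c : ℝ) * p.2 (α x, β y)
        rw [real_inner_smul_left]
        change 0 ≤ (c : ℝ) * _ at h
        linarith }
  let L : P × C(unitInterval × unitInterval, ℝ) →ₗ[ℝ] ℝ :=
    { toFun := fun p => ∫ x, p.1.1.1 x ∂μ + ∫ y, p.1.2.1.1 y ∂ν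
      map_add' := fun p q => by
        change ∫ x, (p.1.1.1 x + q.1.1.1 x) ∂μ + ∫ y, (p.1.2.1.1 y + q.1.2.1.1 y) ∂ν = _
        rw [integral_add p.1.1.2 q.1.1.2, integral_add p.1.2.1.2 q.1.2.1.2]
        ring
      map_smul' := fun c p => by
        change ∫ x, c * p.1.1.1 x ∂μ + ∫ y, c * p.1.2.1.1 y ∂ν = c * _
        rw [integral_const_mul, integral_const_mul]
        ring }
  let D : Submodule ℝ (P × C(unitInterval × unitInterval, ℝ)) := (⊤ : Submodule ℝ P).prod ⊥
  obtain ⟨G, hG, hGs⟩ := riesz_extension s ⟨D, L.comp D.subtype⟩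
    (by
      rintro ⟨⟨⟨a, b, φ⟩, g⟩, hD⟩ hs
      obtain rfl : g = 0 := by simpa [D] using hD
      refine weak_duality hF hT hdom (φ := fun x => φ (α x)) (K := ‖φ‖) a.2 b.2
        (fun x => φ.norm_coe_le_norm _) fun x y => ?_
      simpa using hs x y)
    (by
      rintro ⟨⟨a, b, φ⟩, g⟩
      -- The constant potential `‖g‖` dominates `-g`, so the subspace `g = 0` meets every
      -- translate of the cone.
      refine ⟨⟨(((⟨fun _ => ‖g‖, integrable_const _⟩ : integrableFun μ) - a, -b, -φ), 0),
        by simp [D]⟩, fun x y => ?_⟩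
      have h := (abs_le.1 (g.norm_coe_le_norm (α x, β y))).1
      change 0 ≤ (‖g‖ - a.1 x + a.1 x) + (-b.1 y + b.1 y) +
        ⟪-φ (α x) + φ (α x), F y - T x⟫ + (0 + g (α x, β y))
      rw [neg_add_cancel (φ (α x)), inner_zero_left]
      linarith)
  refine ⟨G.comp (LinearMap.inr ℝ P C(unitInterval × unitInterval, ℝ)), fun a b φ g ha hb h => ?_⟩
  have h1 := hGs (((⟨a, ha⟩, ⟨b, hb⟩, φ), g)) h
  have h2 : G ((⟨a, ha⟩, ⟨b, hb⟩, φ), 0) = ∫ x, a x ∂μ + ∫ y, b y ∂ν :=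
    hG ⟨((⟨a, ha⟩, ⟨b, hb⟩, φ), 0), by simp [D]⟩
  have h3 : (((⟨a, ha⟩, ⟨b, hb⟩, φ), g) : P × C(unitInterval × unitInterval, ℝ))
      = ((⟨a, ha⟩, ⟨b, hb⟩, φ), 0) + LinearMap.inr ℝ P C(unitInterval × unitInterval, ℝ) g := by simp
  rw [h3, map_add, h2] at h1
  exact h1

/-! ### Representation of the functional by a coupling -/

/-- The Riesz–Markov–Kakutani theorem on the compact square, where compact support is no
restriction. -/
lemma exists_measure_unitInterval (Λ : C(unitInterval × unitInterval, ℝ) →ₗ[ℝ] ℝ)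
    (hΛ : ∀ g, (∀ p, 0 ≤ g p) → 0 ≤ Λ g) :
    ∃ m : Measure (unitInterval × unitInterval), IsFiniteMeasure m ∧
      ∀ g : C(unitInterval × unitInterval, ℝ), ∫ p, g p ∂m = Λ g := by
  let Λ' : CompactlySupportedContinuousMap (unitInterval × unitInterval) ℝ →ₚ[ℝ] ℝ :=
    PositiveLinearMap.mk₀
      { toFun := fun g => Λ g.toContinuousMap
        map_add' := fun g h => map_add Λ g.toContinuousMap h.toContinuousMap
        map_smul' := fun c g => map_smul Λ c g.toContinuousMap }
      (fun g hg => hΛ _ hg)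
  refine ⟨RealRMK.rieszMeasure Λ', ?_, fun g => ?_⟩
  · have : IsFiniteMeasureOnCompacts (RealRMK.rieszMeasure Λ') := by infer_instance
    exact CompactSpace.isFiniteMeasure
  · exact RealRMK.integral_rieszMeasure Λ' (CompactlySupportedContinuousMap.continuousMapEquiv g)

/-- A positive functional on the continuous functions on the square, with the images of `μ` and `ν`
as marginals, comes from a coupling of `μ` and `ν`. The Riesz–Markov measure has marginals
concentrated on the ranges of `α` and `β`, hence is itself concentrated on the range of `α × β`
and can be pulled back to `X × Y`. Compactness of the square thus replaces tightness. -/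
lemma exists_coupling_functional {X Y : Type*} [MeasurableSpace X] [MeasurableSpace Y]
    {μ : Measure X} [IsProbabilityMeasure μ] {ν : Measure Y} [IsProbabilityMeasure ν]
    {α : X → unitInterval} {β : Y → unitInterval} (hα : MeasurableEmbedding α)
    (hβ : MeasurableEmbedding β)
    (Λ : C(unitInterval × unitInterval, ℝ) →ₗ[ℝ] ℝ) (hΛ : ∀ g, (∀ p, 0 ≤ g p) → 0 ≤ Λ g)
    (hfst : ∀ f : C(unitInterval, ℝ), Λ (f.comp ContinuousMap.fst) = ∫ x, f (α x) ∂μ)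
    (hsnd : ∀ f : C(unitInterval, ℝ), Λ (f.comp ContinuousMap.snd) = ∫ y, f (β y) ∂ν) :
    ∃ σ : Measure (X × Y), σ.map Prod.fst = μ ∧ σ.map Prod.snd = ν ∧
      ∀ g : C(unitInterval × unitInterval, ℝ), ∫ p, g (α p.1, β p.2) ∂σ = Λ g := by
  obtain ⟨m, _, hm⟩ := exists_measure_unitInterval Λ hΛ
  have : IsProbabilityMeasure (μ.map α) :=
    Measure.isProbabilityMeasure_map hα.measurable.aemeasurable
  have : IsProbabilityMeasure (ν.map β) :=
    Measure.isProbabilityMeasure_map hβ.measurable.aemeasurable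
  have m1 : m.map Prod.fst = μ.map α := ext_of_forall_integral_eq_of_IsFiniteMeasure fun f => by
    rw [integral_map measurable_fst.aemeasurable f.continuous.aestronglyMeasurable,
      integral_map hα.measurable.aemeasurable f.continuous.aestronglyMeasurable]
    exact (hm (f.toContinuousMap.comp ContinuousMap.fst)).trans (hfst f.toContinuousMap)
  have m2 : m.map Prod.snd = ν.map β := ext_of_forall_integral_eq_of_IsFiniteMeasure fun f => by
    rw [integral_map measurable_snd.aemeasurable f.continuous.aestronglyMeasurable,
      integral_map hβ.measurable.aemeasurable f.continuous.aestronglyMeasurable]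
    exact (hm (f.toContinuousMap.comp ContinuousMap.snd)).trans (hsnd f.toContinuousMap)
  have he : MeasurableEmbedding (Prod.map α β) := hα.prodMap hβ
  -- The marginals of `m` do not charge the complements of the ranges, hence neither does `m`.
  have hr1 : ∀ᵐ p ∂m, p.1 ∈ Set.range α := by
    have : ∀ᵐ s ∂(m.map Prod.fst), s ∈ Set.range α := by
      rw [m1, hα.ae_map_iff]
      exact ae_of_all _ fun x => ⟨x, rfl⟩
    exact ae_of_ae_map measurable_fst.aemeasurable this
  have hr2 : ∀ᵐ p ∂m, p.2 ∈ Set.range β := by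
    have : ∀ᵐ s ∂(m.map Prod.snd), s ∈ Set.range β := by
      rw [m2, hβ.ae_map_iff]
      exact ae_of_all _ fun x => ⟨x, rfl⟩
    exact ae_of_ae_map measurable_snd.aemeasurable this
  have hmap : (m.comap (Prod.map α β)).map (Prod.map α β) = m := by
    rw [he.map_comap, Measure.restrict_eq_self_of_ae_mem]
    filter_upwards [hr1, hr2] with p ⟨x, hx⟩ ⟨y, hy⟩
    exact ⟨(x, y), Prod.ext hx hy⟩
  refine ⟨m.comap (Prod.map α β), ?_, ?_, fun g => ?_⟩
  · refine hα.map_injective ?_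
    rw [← m1, Measure.map_map hα.measurable measurable_fst]
    conv_rhs => rw [← hmap]
    rw [Measure.map_map measurable_fst he.measurable]
    rfl
  · refine hβ.map_injective ?_
    rw [← m2, Measure.map_map hβ.measurable measurable_snd]
    conv_rhs => rw [← hmap]
    rw [Measure.map_map measurable_snd he.measurable]
    rfl
  · rw [← hm g]
    conv_rhs => rw [← hmap]
    rw [he.integral_map]
    rfl

/-! ### The barycenter identity -/

/-- Continuous vector fields on the interval, composed with the embedding `α`, separate integrable
maps modulo `μ`-null sets: on the image measure on `ℝ`, smooth compactly supported functions times
constant vectors already suffice. -/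
lemma ae_eq_of_integral_inner_eq {X : Type*} [MeasurableSpace X] {μ : Measure X}
    [IsFiniteMeasure μ] {α : X → unitInterval} (hα : MeasurableEmbedding α) {d : ℕ}
    {f f' : X → EuclideanSpace ℝ (Fin d)} (hf : Integrable f μ) (hf' : Integrable f' μ)
    (h : ∀ φ : C(unitInterval, EuclideanSpace ℝ (Fin d)),
      ∫ x, ⟪φ (α x), f x⟫ ∂μ = ∫ x, ⟪φ (α x), f' x⟫ ∂μ) : f =ᵐ[μ] f' := by
  have he : MeasurableEmbedding (fun x => (α x : ℝ)) :=
    (MeasurableEmbedding.subtype_coe measurableSet_Icc).comp hα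
  let ι : X → ℝ := fun x => (α x : ℝ)
  let k : ℝ → EuclideanSpace ℝ (Fin d) := Function.extend ι (f - f') 0
  have hk : ∀ x, k (ι x) = f x - f' x := fun x => he.injective.extend_apply _ _ _
  have hki : Integrable k (μ.map ι) := by
    rw [he.integrable_map_iff]
    exact (hf.sub hf').congr (ae_of_all _ fun x => (hk x).symm)
  have := ae_eq_zero_of_integral_contDiff_smul_eq_zero hki.locallyIntegrable fun g hg hgs => by
    rw [he.integral_map]
    obtain ⟨C, hC⟩ := hg.continuous.bounded_above_of_compact_support hgs
    have hgi : ∀ f : X → EuclideanSpace ℝ (Fin d), Integrable f μ →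
        Integrable (fun x => g (ι x) • f x) μ := fun f hf =>
      hf.bdd_smul C (hg.continuous.measurable.comp he.measurable).aestronglyMeasurable
        (ae_of_all _ fun x => hC _)
    refine ext_inner_left ℝ fun v => ?_
    have h1 := h ⟨fun t => g t • v, by have := hg.continuous; fun_prop⟩
    have h2 : ∀ f : X → EuclideanSpace ℝ (Fin d), Integrable f μ →
        ∫ x, ⟪g (ι x) • v, f x⟫ ∂μ = ⟪v, ∫ x, g (ι x) • f x ∂μ⟫ := fun f hf => by
      rw [← integral_inner (hgi f hf)]
      simp only [real_inner_smul_left, real_inner_smul_right]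
    have h3 := (h2 f hf).symm.trans (h1.trans (h2 f' hf'))
    have h4 : ∫ x, g (ι x) • k (ι x) ∂μ
        = ∫ x, g (ι x) • f x ∂μ - ∫ x, g (ι x) • f' x ∂μ := by
      rw [← integral_sub (hgi f hf) (hgi f' hf')]
      simp only [hk, smul_sub]
    change ⟪v, ∫ x, g (ι x) • k (ι x) ∂μ⟫ = _
    rw [h4, inner_sub_right, h3, sub_self, inner_zero_right]
  rw [he.ae_map_iff] at this
  filter_upwards [this] with x hx
  exact sub_eq_zero.1 ((hk x).symm.trans hx)

lemma integrable_inner_comp {Z K E : Type*} [MeasurableSpace Z] {ρ : Measure Z}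
    [TopologicalSpace K] [CompactSpace K] [MeasurableSpace K] [OpensMeasurableSpace K]
    [NormedAddCommGroup E] [InnerProductSpace ℝ E] [SecondCountableTopology E]
    (φ : C(K, E)) {γ : Z → K} (hγ : Measurable γ) {H : Z → E} (hH : Integrable H ρ) :
    Integrable (fun z => ⟪φ (γ z), H z⟫) ρ := by
  borelize E
  refine (hH.norm.const_mul ‖φ‖).mono'
    ((φ.continuous.measurable.comp hγ).aestronglyMeasurable.inner hH.1) (ae_of_all _ fun z => ?_)
  exact (norm_inner_le_norm _ _).trans
    (mul_le_mul_of_nonneg_right (φ.norm_coe_le_norm _) (norm_nonneg _))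

/-- The positivity of `Λ` extends from continuous functions to the function `⟪φ (α x), F y⟫`, which
need not be continuous in `β y`. With `f` continuous and `f ∘ β` close to `F` in `L¹(ν)`, the
inequality `hΛ` is applied to `-⟪φ (α x), f (β y)⟫`, the error being absorbed by the potential
`‖φ‖ * ‖F y - f (β y)‖` of `y`. Replacing `φ` by `-φ` yields the reverse inequality. -/
lemma integral_inner_le {X Y : Type*} [MeasurableSpace X] [MeasurableSpace Y]
    {μ : Measure X} [IsProbabilityMeasure μ] {ν : Measure Y} [IsProbabilityMeasure ν]
    {d : ℕ} {F : Y → EuclideanSpace ℝ (Fin d)} (hF : Integrable F ν)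
    {T : X → EuclideanSpace ℝ (Fin d)} (hT : Integrable T μ)
    {α : X → unitInterval} {β : Y → unitInterval} (hα : MeasurableEmbedding α)
    (hβ : MeasurableEmbedding β)
    {Λ : C(unitInterval × unitInterval, ℝ) →ₗ[ℝ] ℝ}
    (hΛ : ∀ (a : X → ℝ) (b : Y → ℝ)
      (φ : C(unitInterval, EuclideanSpace ℝ (Fin d))) (g : C(unitInterval × unitInterval, ℝ)),
      Integrable a μ → Integrable b ν →
      (∀ x y, 0 ≤ a x + b y + ⟪φ (α x), F y - T x⟫ + g (α x, β y)) →
      0 ≤ ∫ x, a x ∂μ + ∫ y, b y ∂ν + Λ g)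
    {σ : Measure (X × Y)} (h2 : σ.map Prod.snd = ν)
    (hσ : ∀ g : C(unitInterval × unitInterval, ℝ), ∫ p, g (α p.1, β p.2) ∂σ = Λ g)
    (φ : C(unitInterval, EuclideanSpace ℝ (Fin d))) :
    ∫ p, ⟪φ (α p.1), F p.2⟫ ∂σ ≤ ∫ x, ⟪φ (α x), T x⟫ ∂μ := by
  have : IsProbabilityMeasure (σ.map Prod.snd) := h2 ▸ inferInstance
  have : IsProbabilityMeasure σ := Measure.isProbabilityMeasure_of_map Prod.snd
  have hFσ : Integrable (fun p : X × Y => F p.2) σ := by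
    rw [← h2] at hF
    exact hF.comp_measurable measurable_snd
  refine le_of_forall_pos_le_add fun ε hε => ?_
  -- `F` is approximated in `L¹(ν)` by a function `f ∘ β` with `f` continuous on the interval.
  let k : unitInterval → EuclideanSpace ℝ (Fin d) := Function.extend β F 0
  have hk : ∀ y, k (β y) = F y := fun y => hβ.injective.extend_apply _ _ _
  have hki : Integrable k (ν.map β) := by
    rw [hβ.integrable_map_iff]
    exact hF.congr (ae_of_all _ fun y => (hk y).symm)
  have : IsProbabilityMeasure (ν.map β) :=
    Measure.isProbabilityMeasure_map hβ.measurable.aemeasurable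
  obtain ⟨f, hfε, hfi⟩ := hki.exists_boundedContinuous_integral_sub_le
    (ε := ε / (2 * (‖φ‖ + 1))) (by positivity)
  rw [hβ.integral_map] at hfε
  simp only [hk] at hfε
  rw [hβ.integrable_map_iff] at hfi
  let g : C(unitInterval × unitInterval, ℝ) := ⟨fun p => ⟪φ p.1, f p.2⟫, by fun_prop⟩
  have hdiff : Integrable (fun y => ‖F y - f (β y)‖) ν := (hF.sub hfi).norm
  have hpt : ∀ x y, |⟪φ (α x), F y⟫ - g (α x, β y)| ≤ ‖φ‖ * ‖F y - f (β y)‖ := fun x y => by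
    change |⟪φ (α x), F y⟫ - ⟪φ (α x), f (β y)⟫| ≤ _
    rw [← inner_sub_right]
    exact (abs_real_inner_le_norm _ _).trans
      (mul_le_mul_of_nonneg_right (φ.norm_coe_le_norm _) (norm_nonneg _))
  have hA := hΛ (fun x => ⟪φ (α x), T x⟫) (fun y => ‖φ‖ * ‖F y - f (β y)‖) φ (-g)
    (integrable_inner_comp φ hα.measurable hT) (hdiff.const_mul _) fun x y => by
      have := (abs_le.1 (hpt x y)).1
      rw [inner_sub_right, ContinuousMap.neg_apply]
      linarith
  rw [map_neg, ← hσ g, integral_const_mul] at hA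
  have hdσ : Integrable (fun p : X × Y => ‖F p.2 - f (β p.2)‖) σ := by
    rw [← h2] at hdiff
    exact hdiff.comp_measurable measurable_snd
  have hgσ : Integrable (fun p : X × Y => g (α p.1, β p.2)) σ :=
    Integrable.of_bound (C := ‖g‖) ((g.continuous.measurable.comp
      (hα.prodMap hβ).measurable).aestronglyMeasurable) (ae_of_all _ fun p => g.norm_coe_le_norm _)
  have hB : ∫ p, ⟪φ (α p.1), F p.2⟫ ∂σ
      ≤ ∫ p, (g (α p.1, β p.2) + ‖φ‖ * ‖F p.2 - f (β p.2)‖) ∂σ :=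
    integral_mono (integrable_inner_comp φ (hα.measurable.comp measurable_fst) hFσ)
      (hgσ.add (hdσ.const_mul _)) fun p => by
        have := (abs_le.1 (hpt p.1 p.2)).2
        dsimp only
        linarith
  rw [integral_add hgσ (hdσ.const_mul _), integral_const_mul] at hB
  have hC : ∫ p, ‖F p.2 - f (β p.2)‖ ∂σ = ∫ y, ‖F y - f (β y)‖ ∂ν := by
    rw [← h2] at hdiff ⊢
    rw [integral_map measurable_snd.aemeasurable hdiff.1]
  rw [hC] at hB
  have hD : ‖φ‖ * ∫ y, ‖F y - f (β y)‖ ∂ν ≤ ε / 2 := by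
    calc ‖φ‖ * ∫ y, ‖F y - f (β y)‖ ∂ν ≤ (‖φ‖ + 1) * (ε / (2 * (‖φ‖ + 1))) :=
          mul_le_mul (by linarith) hfε (integral_nonneg fun _ => norm_nonneg _) (by positivity)
      _ = ε / 2 := by field_simp
  linarith

/-- **Every map dominated in the convex order is the conditional barycenter map of some
transport plan.** Let `X, Y` be Polish spaces, `μ, ν` Borel probability measures,
`F : Y → ℝ^d` Borel measurable and `ν`-integrable, and `T : X → ℝ^d` Borel measurable with
`μ∘T⁻¹ ≼_c ν∘F⁻¹`. Then there exists `σ ∈ Π(μ,ν)` whose conditional measures satisfy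
`∫_Y F(y) σ^x(dy) = T(x)` for `μ`-a.e. `x`. -/
theorem exists_coupling_condBarycenter_eq_of_convexDom
    {X Y : Type*} [MeasurableSpace X] [TopologicalSpace X] [PolishSpace X] [BorelSpace X]
    [MeasurableSpace Y] [TopologicalSpace Y] [PolishSpace Y] [BorelSpace Y] [Nonempty Y]
    (μ : Measure X) [IsProbabilityMeasure μ] (ν : Measure Y) [IsProbabilityMeasure ν]
    {d : ℕ} (F : Y → EuclideanSpace ℝ (Fin d)) (hFmeas : Measurable F)
    (hFint : Integrable F ν)
    (T : X → EuclideanSpace ℝ (Fin d)) (hTmeas : Measurable T)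
    (hdom : ConvexDom (μ.map T) (ν.map F)) :
    ∃ σ : ProbabilityMeasure (X × Y),
      (σ : Measure (X × Y)).map Prod.fst = μ ∧
      (σ : Measure (X × Y)).map Prod.snd = ν ∧
      ∀ᵐ x ∂μ, ∫ y, F y ∂(condMeas σ x) = T x := by
  have hX : Nonempty X := nonempty_of_isProbabilityMeasure μ
  have hTi : Integrable T μ := by
    have h := (integrable_norm_iff (by fun_prop)).1 hdom.1
    exact h.comp_measurable hTmeas
  obtain ⟨α, hα⟩ : ∃ α : X → unitInterval, MeasurableEmbedding α :=
    ⟨_, measurableEmbedding_sigmoid_comp_embeddingReal X⟩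
  obtain ⟨β, hβ⟩ : ∃ β : Y → unitInterval, MeasurableEmbedding β :=
    ⟨_, measurableEmbedding_sigmoid_comp_embeddingReal Y⟩
  obtain ⟨Λ, hΛ⟩ := exists_functional hFmeas hTmeas hdom α β
  -- Testing with `φ = 0` and a potential of one variable alone controls the marginals.
  have hfst_le : ∀ f : C(unitInterval, ℝ), Λ (f.comp ContinuousMap.fst) ≤
      ∫ x, f (α x) ∂μ := fun f => by
    have h := hΛ (fun x => f (α x)) 0 0 (-f.comp ContinuousMap.fst)
      (Integrable.of_bound (C := ‖f‖) (f.continuous.measurable.comp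
        hα.measurable).aestronglyMeasurable (ae_of_all _ fun p => f.norm_coe_le_norm _))
      (integrable_zero _ _ _) (fun x y => by simp)
    rw [map_neg] at h
    simp at h
    linarith
  have hsnd_le : ∀ f : C(unitInterval, ℝ), Λ (f.comp ContinuousMap.snd) ≤
      ∫ y, f (β y) ∂ν := fun f => by
    have h := hΛ 0 (fun y => f (β y)) 0 (-f.comp ContinuousMap.snd)
      (integrable_zero _ _ _)
      (Integrable.of_bound (C := ‖f‖) (f.continuous.measurable.comp
        hβ.measurable).aestronglyMeasurable (ae_of_all _ fun p => f.norm_coe_le_norm _))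
      (fun x y => by simp)
    rw [map_neg] at h
    simp at h
    linarith
  obtain ⟨σ, h1, h2, hσ⟩ := exists_coupling_functional (μ := μ) (ν := ν) hα hβ Λ
    (fun g hg => by
      have h := hΛ 0 0 0 g (integrable_zero _ _ _) (integrable_zero _ _ _)
        (fun x y => by simpa using hg _)
      simpa using h)
    (fun f => le_antisymm (hfst_le f) (by
      have h := hfst_le (-f)
      rw [show (-f).comp ContinuousMap.fst = -(f.comp
          (ContinuousMap.fst : C(unitInterval × unitInterval, unitInterval))) from rfl,
        map_neg] at h
      simp only [ContinuousMap.neg_apply, integral_neg] at h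
      linarith))
    (fun f => le_antisymm (hsnd_le f) (by
      have h := hsnd_le (-f)
      rw [show (-f).comp ContinuousMap.snd = -(f.comp
          (ContinuousMap.snd : C(unitInterval × unitInterval, unitInterval))) from rfl,
        map_neg] at h
      simp only [ContinuousMap.neg_apply, integral_neg] at h
      linarith))
  have : IsProbabilityMeasure (σ.map Prod.snd) := h2 ▸ inferInstance
  have hσp : IsProbabilityMeasure σ := Measure.isProbabilityMeasure_of_map Prod.snd
  refine ⟨⟨σ, hσp⟩, h1, h2, ?_⟩
  have hFσ : Integrable (fun p : X × Y => F p.2) σ := by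
    have hF := hFint
    rw [← h2] at hF
    exact hF.comp_measurable measurable_snd
  have hm : Integrable (fun x => ∫ y, F y ∂(σ.condKernel x)) μ := by
    have h := hFσ.integral_condKernel
    rwa [show σ.fst = μ from h1] at h
  have hle := fun φ => integral_inner_le hFint hTi hα hβ hΛ h2 hσ φ
  refine ae_eq_of_integral_inner_eq hα hm hTi fun φ => ?_
  have hφF : Integrable (fun p : X × Y => ⟪φ (α p.1), F p.2⟫) σ :=
    integrable_inner_comp φ (hα.measurable.comp measurable_fst) hFσ
  have hsplit : ∫ x, ⟪φ (α x), ∫ y, F y ∂(σ.condKernel x)⟫ ∂μ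
      = ∫ p, ⟪φ (α p.1), F p.2⟫ ∂σ := by
    rw [← Measure.integral_condKernel hφF, show σ.fst = μ from h1]
    refine integral_congr_ae ?_
    have h := hFσ.condKernel_ae
    rw [show σ.fst = μ from h1] at h
    filter_upwards [h] with x hx
    exact (integral_inner hx _).symm
  refine hsplit.trans (le_antisymm (hle φ) ?_)
  have h := hle (-φ)
  simp only [ContinuousMap.neg_apply, inner_neg_left, integral_neg] at h
  linarith
end
end
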